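/- Let n ≥ 2, 0 < σ < n/2, M₀ > 0, u₀(x) = M₀|x|^{-(n-2σ)/2}, and let P_σ(x,t) = β(n,σ) t^{2σ}/(|x|²+t²)^{(n+2σ)/2} be the Poisson kernel with β(n,σ) = (2/|𝕊^{n-1}|) Γ(n/2 + σ)/(Γ(n/2)Γ(σ)). Then the extension U₀(x,t) = ∫_{ℝⁿ} P_σ(x - y, t) u₀(y) dy satisfies, for all (x,t) ∈ ℝⁿ × (0,∞), U₀(x,t) = (Γ((n+2σ)/4)²/(Γ(n/2)Γ(σ))) · M₀ (|x|² + t²)^{-(n-2σ)/4} ₂F₁( (n-2σ)/4, (n-2σ)/4; n/2; |x|²/(|x|²+t²) ). -/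

import Mathlib

/-- The Gauss hypergeometric function, defined by its series. -/
noncomputable def hyp2F1 (a b c z : ℝ) : ℝ :=
  ∑' s : ℕ, ((ascPochhammer ℝ s).eval a * (ascPochhammer ℝ s).eval b /
    (ascPochhammer ℝ s).eval c) * z ^ s / (Nat.factorial s : ℝ)

/-! Since `Γ(m) * r ^ (-m) = ∫ s ^ (m - 1) * exp (-r * s) ds`, integrating `(A + φ) ^ (-m)` reduces
to knowing the Laplace transform of `φ`. With `φ(w) = B * w` on the half-line this gives Feynman's
formula, which merges the two powers in `∫ (‖x - y‖² + T) ^ (-p) * ‖y‖ ^ (-2 * a) dy` into the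
single power `(‖x - y‖² + T + ‖y‖² * w) ^ (-(a + p))`, integrated against `w ^ (a - 1) dw`.
Completing the square in `y` centres this power at `x / (1 + w)`, and with `φ(y) = b * ‖y‖²` the
integral in `y` reduces to a Gaussian one. What remains is the integral over `w > 0` of
`w ^ (a - 1) * (1 + w) ^ (-q) * (A + B * w) ^ (q - c)` with `A = T` and `B = ‖x‖² + T`. It is
Euler's integral for `₂F₁(q, a; c; z)` with `z = 1 - A / B = ‖x‖² / (‖x‖² + T)`: since
`A * (1 + w) / (A + B * w) = 1 - z * h` for `h = B * w / (A + B * w)`, the binomial series of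
`(1 - z * h) ^ (-q)` leaves only Beta integrals. -/

section
open MeasureTheory Set Real Module

section Subordination

variable {X Y : Type*} [MeasurableSpace X] [MeasurableSpace Y] {μ : Measure X} {ν : Measure Y}
  [SFinite μ]

theorem integral_integral_swap_of_nonneg [SFinite ν] {f : X → Y → ℝ}
    (hf : Measurable (Function.uncurry f)) (hf₀ : ∀ᵐ x ∂μ, ∀ᵐ y ∂ν, 0 ≤ f x y)
    (hfx : ∀ᵐ x ∂μ, Integrable (f x) ν) (hfy : ∀ᵐ y ∂ν, Integrable (f · y) μ) :
    ∫ x, ∫ y, f x y ∂ν ∂μ = ∫ y, ∫ x, f x y ∂μ ∂ν := by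
  by_cases hint : Integrable (Function.uncurry f) (μ.prod ν)
  · exact integral_integral_swap hint
  -- By Tonelli neither iterated integral converges, so both are `0` by convention.
  have hf₀' : ∀ᵐ y ∂ν, ∀ᵐ x ∂μ, 0 ≤ f x y :=
    (Measure.ae_ae_comm (p := fun x y ↦ 0 ≤ f x y) (measurableSet_le measurable_const hf)).1 hf₀
  have hx : ¬ Integrable (fun x ↦ ∫ y, f x y ∂ν) μ := fun h ↦
    hint <| (integrable_prod_iff hf.aestronglyMeasurable).2 ⟨hfx, h.congr <| hf₀.mono fun x hx ↦
      integral_congr_ae <| hx.mono fun y hy ↦ (norm_of_nonneg hy).symm⟩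
  have hy : ¬ Integrable (fun y ↦ ∫ x, f x y ∂μ) ν := fun h ↦
    hint <| (integrable_prod_iff' hf.aestronglyMeasurable).2 ⟨hfy, h.congr <| hf₀'.mono fun y hy ↦
      integral_congr_ae <| hy.mono fun x hx ↦ (norm_of_nonneg hx).symm⟩
  rw [integral_undef hx, integral_undef hy]

theorem integral_rpow_mul_exp_neg_mul_eq_rpow_neg {m r : ℝ} (hm : 0 < m) (hr : 0 < r) :
    ∫ s in Ioi (0 : ℝ), s ^ (m - 1) * exp (-(r * s)) = r ^ (-m) * Gamma m := by
  rw [integral_rpow_mul_exp_neg_mul_Ioi hm hr, one_div, inv_rpow hr.le, rpow_neg hr.le]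

theorem integrableOn_rpow_mul_exp_neg_mul {m r : ℝ} (hm : 0 < m) (hr : 0 < r) :
    IntegrableOn (fun s ↦ s ^ (m - 1) * exp (-(r * s))) (Ioi 0) := by
  refine .of_integral_ne_zero ?_
  rw [integral_rpow_mul_exp_neg_mul_eq_rpow_neg hm hr]
  positivity

/- A function with nonzero Bochner integral is integrable, so with `hK` the hypothesis `hL` also
says that `g * exp (-(s * φ))` is integrable. -/
theorem integral_mul_add_rpow_neg {g φ : X → ℝ} (hg : Measurable g) (hφ : Measurable φ)
    (hg₀ : ∀ᵐ x ∂μ, 0 ≤ g x) (hφ₀ : ∀ᵐ x ∂μ, 0 ≤ φ x) {A K κ m : ℝ} (hA : 0 < A) (hK : K ≠ 0)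
    (hm : 0 < m) (hκ : κ < m)
    (hL : ∀ s > 0, ∫ x, g x * exp (-(s * φ x)) ∂μ = K * s ^ (-κ)) :
    ∫ x, g x * (A + φ x) ^ (-m) ∂μ = K * (Gamma (m - κ) / Gamma m) * A ^ (κ - m) := by
  have inner_s : ∀ᵐ x ∂μ,
      ∫ s in Ioi (0 : ℝ), g x * (s ^ (m - 1) * exp (-((A + φ x) * s))) =
        Gamma m * (g x * (A + φ x) ^ (-m)) := by
    filter_upwards [hφ₀] with x hx
    rw [integral_const_mul, integral_rpow_mul_exp_neg_mul_eq_rpow_neg hm (by positivity)]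
    ring
  have split (s : ℝ) (x : X) : g x * (s ^ (m - 1) * exp (-((A + φ x) * s))) =
      s ^ (m - 1) * exp (-(A * s)) * (g x * exp (-(s * φ x))) := by
    rw [show -((A + φ x) * s) = -(A * s) + -(s * φ x) by ring, exp_add]
    ring
  have inner_x : ∀ s ∈ Ioi (0 : ℝ),
      ∫ x, g x * (s ^ (m - 1) * exp (-((A + φ x) * s))) ∂μ =
        K * (s ^ (m - κ - 1) * exp (-(A * s))) := fun s hs ↦ by
    simp_rw [split]
    rw [integral_const_mul, hL s hs, sub_right_comm, sub_eq_add_neg (m - 1), rpow_add hs]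
    ring
  have swap : ∫ x, (∫ s in Ioi (0 : ℝ), g x * (s ^ (m - 1) * exp (-((A + φ x) * s)))) ∂μ =
      ∫ s in Ioi (0 : ℝ), ∫ x, g x * (s ^ (m - 1) * exp (-((A + φ x) * s))) ∂μ := by
    refine integral_integral_swap_of_nonneg (by fun_prop) ?_ ?_ ?_
    · filter_upwards [hg₀] with x hx
      filter_upwards [ae_restrict_mem measurableSet_Ioi] with s (hs : 0 < s)
      positivity
    · filter_upwards [hφ₀] with x hx
      exact (integrableOn_rpow_mul_exp_neg_mul hm (by positivity)).const_mul _
    · filter_upwards [ae_restrict_mem measurableSet_Ioi] with s (hs : 0 < s)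
      simp_rw [split]
      refine Integrable.const_mul (.of_integral_ne_zero ?_) _
      rw [hL s hs]
      positivity
  rw [integral_congr_ae inner_s, setIntegral_congr_fun measurableSet_Ioi inner_x,
    integral_const_mul, integral_const_mul,
    integral_rpow_mul_exp_neg_mul_eq_rpow_neg (sub_pos.2 hκ) hA, neg_sub] at swap
  field_simp
  linear_combination swap

end Subordination

theorem integral_rpow_mul_add_mul_rpow_neg {a p A B : ℝ} (ha : 0 < a) (hp : 0 < p) (hA : 0 < A)
    (hB : 0 < B) :
    ∫ w in Ioi (0 : ℝ), w ^ (a - 1) * (A + B * w) ^ (-(a + p)) =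
      Gamma a * Gamma p / Gamma (a + p) * A ^ (-p) * B ^ (-a) := by
  rw [integral_mul_add_rpow_neg (K := Gamma a * B ^ (-a)) (κ := a) (by fun_prop) (by fun_prop)
    ?_ ?_ hA (by positivity) (by positivity) (by linarith) fun s hs ↦ ?_]
  · rw [add_sub_cancel_left, sub_add_cancel_left]
    ring
  · filter_upwards [ae_restrict_mem measurableSet_Ioi] with w (hw : 0 < w)
    positivity
  · filter_upwards [ae_restrict_mem measurableSet_Ioi] with w (hw : 0 < w)
    positivity
  · simp_rw [← mul_assoc s B]
    rw [integral_rpow_mul_exp_neg_mul_eq_rpow_neg ha (by positivity), mul_rpow hs.le hB.le]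
    ring

theorem integrableOn_rpow_mul_add_mul_rpow_neg {a p A B : ℝ} (ha : 0 < a) (hp : 0 < p)
    (hA : 0 < A) (hB : 0 < B) :
    IntegrableOn (fun w ↦ w ^ (a - 1) * (A + B * w) ^ (-(a + p))) (Ioi 0) := by
  refine .of_integral_ne_zero ?_
  rw [integral_rpow_mul_add_mul_rpow_neg ha hp hA hB]
  positivity

section Hypergeometric

theorem Gamma_add_natCast {a : ℝ} (ha : ∀ k : ℕ, a ≠ -k) (k : ℕ) :
    Gamma (a + k) = Gamma a * (ascPochhammer ℝ k).eval a := by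
  induction k with
  | zero => simp
  | succ k ih =>
    have hak : a + k ≠ 0 := by simpa [eq_neg_iff_add_eq_zero] using ha k
    rw [ascPochhammer_succ_eval, Nat.cast_succ, ← add_assoc, Gamma_add_one hak, ih]
    ring

theorem hasSum_one_sub_rpow_neg (q : ℝ) {z : ℝ} (hz : |z| < 1) :
    HasSum (fun k : ℕ ↦ (ascPochhammer ℝ k).eval q / k.factorial * z ^ k) ((1 - z) ^ (-q)) := by
  have hzball : z ∈ Metric.eball (0 : ℝ) 1 := by
    rw [← ENNReal.ofReal_one, Metric.eball_ofReal]
    simpa using hz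
  have h := (one_div_one_sub_rpow_hasFPowerSeriesOnBall_zero q).hasSum hzball
  have hcoeff (k : ℕ) : Ring.choose (q + k - 1) k = (ascPochhammer ℝ k).eval q / k.factorial := by
    rw [eq_div_iff (by positivity), mul_comm, ← nsmul_eq_mul,
      ← Polynomial.ascPochhammer_smeval_eq_eval,
      ← Ring.factorial_nsmul_multichoose_eq_ascPochhammer, Ring.choose]
    congr 2
    ring
  simpa [hcoeff, rpow_neg (sub_nonneg.2 (abs_lt.1 hz).2.le), mul_comm] using h

theorem hasSum_integral_mul_one_sub_mul_rpow_neg {X : Type*} [MeasurableSpace X] {μ : Measure X}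
    {g h : X → ℝ} (hg : Integrable g μ) (hh : AEStronglyMeasurable h μ)
    (hh₁ : ∀ᵐ x ∂μ, |h x| ≤ 1) (q : ℝ) {z : ℝ} (hz : |z| < 1) :
    HasSum (fun k : ℕ ↦ (ascPochhammer ℝ k).eval q / k.factorial * z ^ k * ∫ x, g x * h x ^ k ∂μ)
      (∫ x, g x * (1 - z * h x) ^ (-q) ∂μ) := by
  simp_rw [← integral_const_mul]
  have hsum : Summable fun k : ℕ ↦ ‖(ascPochhammer ℝ k).eval q / k.factorial * z ^ k‖ :=
    (hasSum_one_sub_rpow_neg q hz).summable.norm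
  refine hasSum_integral_of_dominated_convergence
    (fun k x ↦ ‖(ascPochhammer ℝ k).eval q / k.factorial * z ^ k‖ * ‖g x‖)
    (fun k ↦ (hg.aestronglyMeasurable.mul (hh.pow k)).const_mul _) (fun k ↦ ?_)
    (.of_forall fun x ↦ hsum.mul_right _) ?_ ?_
  · filter_upwards [hh₁] with x hx
    rw [norm_mul, norm_mul (g x), norm_pow]
    gcongr
    exact mul_le_of_le_one_right (norm_nonneg _) (pow_le_one₀ (norm_nonneg _) hx)
  · simp_rw [tsum_mul_right]
    exact hg.norm.const_mul _
  · filter_upwards [hh₁] with x hx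
    have hzx : |z * h x| < 1 := by
      rw [abs_mul]
      exact mul_lt_one_of_nonneg_of_lt_one_left (abs_nonneg z) hz hx
    refine ((hasSum_one_sub_rpow_neg q hzx).mul_left (g x)).congr_fun fun k ↦ ?_
    ring

theorem integral_rpow_mul_add_mul_rpow_neg_mul_div_pow {a b A B : ℝ} (ha : 0 < a) (hb : 0 < b)
    (hA : 0 < A) (hB : 0 < B) (k : ℕ) :
    ∫ w in Ioi (0 : ℝ), w ^ (a - 1) * (A + B * w) ^ (-(a + b)) * (B * w / (A + B * w)) ^ k =
      Gamma (a + k) * Gamma b / Gamma (a + b + k) * A ^ (-b) * B ^ (-a) := by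
  have collect : ∀ w ∈ Ioi (0 : ℝ),
      w ^ (a - 1) * (A + B * w) ^ (-(a + b)) * (B * w / (A + B * w)) ^ k =
        B ^ k * (w ^ (a + k - 1) * (A + B * w) ^ (-(a + k + b))) := fun w (hw : 0 < w) ↦ by
    have hD : 0 < A + B * w := by positivity
    rw [add_sub_right_comm a k, rpow_add_natCast hw.ne', add_right_comm a k,
      neg_add _ (k : ℝ), rpow_add hD, rpow_neg hD.le k, rpow_natCast, div_pow, mul_pow]
    ring
  rw [setIntegral_congr_fun measurableSet_Ioi collect, integral_const_mul,
    integral_rpow_mul_add_mul_rpow_neg (by positivity) hb hA hB, neg_add a, rpow_add hB,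
    rpow_neg hB.le k, rpow_natCast, add_right_comm a k]
  field_simp

theorem integral_rpow_mul_one_add_rpow_neg_mul_add_mul_rpow {a c A B : ℝ} (q : ℝ) (ha : 0 < a)
    (hac : a < c) (hA : 0 < A) (hAB : A < 2 * B) :
    ∫ w in Ioi (0 : ℝ), w ^ (a - 1) * (1 + w) ^ (-q) * (A + B * w) ^ (q - c) =
      Gamma a * Gamma (c - a) / Gamma c * A ^ (q - c + a) * B ^ (-a) *
        hyp2F1 q a c (1 - A / B) := by
  have hB : 0 < B := by linarith
  set z := 1 - A / B with hz
  have hz₁ : |z| < 1 := by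
    have hpos : 0 < A / B := by positivity
    have hlt : A / B < 2 := (div_lt_iff₀ hB).2 hAB
    exact abs_lt.2 ⟨by linarith, by linarith⟩
  have hca : 0 < c - a := sub_pos.2 hac
  let g (w : ℝ) : ℝ := w ^ (a - 1) * (A + B * w) ^ (-(a + (c - a)))
  let h (w : ℝ) : ℝ := B * w / (A + B * w)
  have factor : ∀ w ∈ Ioi (0 : ℝ), w ^ (a - 1) * (1 + w) ^ (-q) * (A + B * w) ^ (q - c) =
      A ^ q * (g w * (1 - z * h w) ^ (-q)) := fun w (hw : 0 < w) ↦ by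
    have hD : 0 < A + B * w := by positivity
    have h1w : 1 - z * h w = A * (1 + w) / (A + B * w) := by
      simp only [hz, h]
      field_simp
      ring
    rw [h1w, div_rpow (by positivity) hD.le, mul_rpow hA.le (by positivity),
      rpow_neg hA.le, rpow_neg hD.le, sub_eq_add_neg q c, rpow_add hD]
    simp only [g, add_sub_cancel]
    field_simp
  have hh₁ : ∀ᵐ w ∂volume.restrict (Ioi (0 : ℝ)), |h w| ≤ 1 := by
    filter_upwards [ae_restrict_mem measurableSet_Ioi] with w (hw : 0 < w)
    rw [abs_of_nonneg (by positivity)]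
    exact div_le_one_of_le₀ (by linarith) (by positivity)
  have series := hasSum_integral_mul_one_sub_mul_rpow_neg
    (integrableOn_rpow_mul_add_mul_rpow_neg ha hca hA hB)
    (h := h) (by fun_prop) hh₁ q hz₁
  rw [setIntegral_congr_fun measurableSet_Ioi factor, integral_const_mul, ← series.tsum_eq, hyp2F1,
    ← tsum_mul_left, ← tsum_mul_left]
  congr 1 with k
  have ha' (j : ℕ) : a ≠ -j := by have := j.cast_nonneg (α := ℝ); linarith
  have hc' (j : ℕ) : c ≠ -j := by have := j.cast_nonneg (α := ℝ); linarith
  have hApow : A ^ (q - c + a) = A ^ q * A ^ (-(c - a)) := by rw [← rpow_add hA]; ring_nf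
  rw [integral_rpow_mul_add_mul_rpow_neg_mul_div_pow ha hca hA hB, add_sub_cancel,
    Gamma_add_natCast ha', Gamma_add_natCast hc', hApow]
  field_simp

end Hypergeometric

section InnerProductSpace

variable {V : Type*} [NormedAddCommGroup V] [InnerProductSpace ℝ V]

theorem norm_sub_sq_add_mul_norm_sq (x y : V) {w : ℝ} (hw : 1 + w ≠ 0) :
    ‖x - y‖ ^ 2 + w * ‖y‖ ^ 2 =
      (1 + w) * ‖y - (1 + w)⁻¹ • x‖ ^ 2 + w / (1 + w) * ‖x‖ ^ 2 := by
  rw [norm_sub_sq_real, norm_sub_sq_real, norm_smul, inner_smul_right, real_inner_comm, mul_pow,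
    norm_eq_abs, sq_abs]
  field_simp
  ring

/-- The Poisson kernel `P_σ(x, t)`, of total mass `1` over `V`, of the extension problem for
`(-Δ)^σ`. The dimension is `finrank ℝ V`, and `2 * π ^ (n / 2) / Γ(n / 2)` is the area `|𝕊^{n-1}|`
of the unit sphere. -/
noncomputable def fractionalPoissonKernel (σ : ℝ) (x : V) (t : ℝ) : ℝ :=
  2 / (2 * π ^ (finrank ℝ V / 2 : ℝ) / Gamma (finrank ℝ V / 2)) *
      (Gamma (finrank ℝ V / 2 + σ) / (Gamma (finrank ℝ V / 2) * Gamma σ)) *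
    t ^ (2 * σ) / (‖x‖ ^ 2 + t ^ 2) ^ ((finrank ℝ V + 2 * σ) / 2)

theorem fractionalPoissonKernel_eq [FiniteDimensional ℝ V] [Nontrivial V] (σ : ℝ) (x : V) (t : ℝ) :
    fractionalPoissonKernel σ x t =
      Gamma (finrank ℝ V / 2 + σ) / (π ^ (finrank ℝ V / 2 : ℝ) * Gamma σ) * t ^ (2 * σ) *
        (‖x‖ ^ 2 + t ^ 2) ^ (-(finrank ℝ V / 2 + σ)) := by
  have hn : (0 : ℝ) < finrank ℝ V := by exact_mod_cast finrank_pos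
  rw [fractionalPoissonKernel, rpow_neg (by positivity),
    show (finrank ℝ V + 2 * σ) / 2 = finrank ℝ V / 2 + σ by ring]
  field_simp

variable [FiniteDimensional ℝ V] [MeasurableSpace V] [BorelSpace V]

theorem integral_add_mul_norm_sq_rpow_neg {A b m : ℝ} (hA : 0 < A) (hb : 0 < b)
    (hm : finrank ℝ V / 2 < m) :
    ∫ y : V, (A + b * ‖y‖ ^ 2) ^ (-m) =
      (π / b) ^ (finrank ℝ V / 2 : ℝ) *
        (Gamma (m - finrank ℝ V / 2) / Gamma m) * A ^ (finrank ℝ V / 2 - m) := by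
  have hm₀ : 0 < m := hm.trans_le' (by positivity)
  have gaussian : ∀ s > 0, ∫ y : V, 1 * exp (-(s * (b * ‖y‖ ^ 2))) =
      (π / b) ^ (finrank ℝ V / 2 : ℝ) * s ^ (-(finrank ℝ V / 2 : ℝ)) := fun s hs ↦ by
    have hint := GaussianFourier.integral_rexp_neg_mul_sq_norm (V := V) (mul_pos hs hb)
    simp_rw [one_mul, ← mul_assoc, ← neg_mul (s * b)]
    rw [hint, mul_comm s, ← div_div, div_rpow (by positivity) hs.le, rpow_neg hs.le,
      div_eq_mul_inv]
  simpa only [one_mul] using integral_mul_add_rpow_neg (g := fun _ : V ↦ 1) measurable_const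
    (by fun_prop) (by simp) (.of_forall fun y ↦ by positivity) hA (by positivity) hm₀ hm gaussian

theorem integral_norm_sub_sq_add_add_mul_norm_sq_rpow_neg (x : V) {T w m : ℝ} (hT : 0 < T)
    (hw : 0 ≤ w) (hm : finrank ℝ V / 2 < m) :
    ∫ y : V, (‖x - y‖ ^ 2 + T + ‖y‖ ^ 2 * w) ^ (-m) =
      π ^ (finrank ℝ V / 2 : ℝ) * (Gamma (m - finrank ℝ V / 2) / Gamma m) *
        ((1 + w) ^ (m - finrank ℝ V) *
          (T + (‖x‖ ^ 2 + T) * w) ^ (finrank ℝ V / 2 - m)) := by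
  have hw' : 0 < 1 + w := by positivity
  have square (y : V) : ‖x - y‖ ^ 2 + T + ‖y‖ ^ 2 * w =
      (T + (‖x‖ ^ 2 + T) * w) / (1 + w) + (1 + w) * ‖y - (1 + w)⁻¹ • x‖ ^ 2 := by
    rw [add_right_comm, mul_comm _ w, norm_sub_sq_add_mul_norm_sq x y hw'.ne']
    field_simp
    ring
  simp_rw [square]
  rw [integral_sub_right_eq_self fun y ↦
      ((T + (‖x‖ ^ 2 + T) * w) / (1 + w) + (1 + w) * ‖y‖ ^ 2) ^ (-m),
    integral_add_mul_norm_sq_rpow_neg (by positivity) hw' hm, div_rpow pi_nonneg hw'.le,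
    div_rpow (by positivity) hw'.le,
    show m - finrank ℝ V = m - finrank ℝ V / 2 - finrank ℝ V / 2 by ring, rpow_sub hw',
    rpow_sub hw', rpow_sub hw']
  field_simp

theorem integral_norm_sub_sq_add_rpow_neg_mul_norm_rpow_neg_eq_integral_Ioi [Nontrivial V] (x : V)
    {T a p : ℝ} (hT : 0 < T) (ha : 0 < a) (hp : 0 < p) (hap : finrank ℝ V / 2 < a + p) :
    ∫ y : V, (‖x - y‖ ^ 2 + T) ^ (-p) * ‖y‖ ^ (-(2 * a)) =
      π ^ (finrank ℝ V / 2 : ℝ) * (Gamma (a + p - finrank ℝ V / 2) / (Gamma a * Gamma p)) *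
        ∫ w in Ioi (0 : ℝ), w ^ (a - 1) * (1 + w) ^ (a + p - finrank ℝ V) *
          (T + (‖x‖ ^ 2 + T) * w) ^ (finrank ℝ V / 2 - (a + p)) := by
  have := Gamma_pos_of_pos (sub_pos.2 hap)
  let f (y : V) (w : ℝ) : ℝ := w ^ (a - 1) * (‖x - y‖ ^ 2 + T + ‖y‖ ^ 2 * w) ^ (-(a + p))
  have feynman : ∀ᵐ y : V, ∫ w in Ioi (0 : ℝ), f y w =
      Gamma a * Gamma p / Gamma (a + p) * ((‖x - y‖ ^ 2 + T) ^ (-p) * ‖y‖ ^ (-(2 * a))) := by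
    filter_upwards [Measure.ae_ne volume (0 : V)] with y hy
    rw [integral_rpow_mul_add_mul_rpow_neg ha hp (by positivity) (by positivity), mul_assoc,
      ← rpow_natCast_mul (norm_nonneg y), Nat.cast_ofNat, mul_neg]
  have inner_y : ∀ w ∈ Ioi (0 : ℝ), ∫ y, f y w =
      π ^ (finrank ℝ V / 2 : ℝ) * (Gamma (a + p - finrank ℝ V / 2) / Gamma (a + p)) *
        (w ^ (a - 1) * (1 + w) ^ (a + p - finrank ℝ V) *
          (T + (‖x‖ ^ 2 + T) * w) ^ (finrank ℝ V / 2 - (a + p))) := fun w (hw : 0 < w) ↦ by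
    simp only [f]
    rw [integral_const_mul, integral_norm_sub_sq_add_add_mul_norm_sq_rpow_neg x hT hw.le hap]
    ring
  have swap : ∫ y, (∫ w in Ioi (0 : ℝ), f y w) = ∫ w in Ioi (0 : ℝ), ∫ y, f y w := by
    refine integral_integral_swap_of_nonneg (by fun_prop) ?_ ?_ ?_
    · refine .of_forall fun y ↦ ?_
      filter_upwards [ae_restrict_mem measurableSet_Ioi] with w (hw : 0 < w)
      positivity
    · filter_upwards [Measure.ae_ne volume (0 : V)] with y hy
      exact integrableOn_rpow_mul_add_mul_rpow_neg ha hp (by positivity) (by positivity)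
    · filter_upwards [ae_restrict_mem measurableSet_Ioi] with w (hw : 0 < w)
      refine .of_integral_ne_zero ?_
      rw [inner_y w hw]
      positivity
  rw [integral_congr_ae feynman, integral_const_mul,
    setIntegral_congr_fun measurableSet_Ioi inner_y, integral_const_mul] at swap
  have hne : Gamma a * Gamma p / Gamma (a + p) ≠ 0 := by positivity
  refine mul_left_cancel₀ hne (swap.trans ?_)
  rw [← mul_assoc]
  congr 1
  field_simp

theorem integral_norm_sub_sq_add_rpow_neg_mul_norm_rpow_neg (x : V) {T a p : ℝ} (hT : 0 < T)
    (ha : 0 < a) (ha' : a < finrank ℝ V / 2) (hap : finrank ℝ V / 2 < a + p) :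
    ∫ y : V, (‖x - y‖ ^ 2 + T) ^ (-p) * ‖y‖ ^ (-(2 * a)) =
      π ^ (finrank ℝ V / 2 : ℝ) *
        (Gamma (finrank ℝ V / 2 - a) * Gamma (a + p - finrank ℝ V / 2) /
          (Gamma (finrank ℝ V / 2) * Gamma p)) *
        T ^ (finrank ℝ V / 2 - p) * (‖x‖ ^ 2 + T) ^ (-a) *
          hyp2F1 (finrank ℝ V - (a + p)) a (finrank ℝ V / 2) (‖x‖ ^ 2 / (‖x‖ ^ 2 + T)) := by
  have hV : (0 : ℝ) < finrank ℝ V := by linarith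
  have : Nontrivial V := nontrivial_of_finrank_pos (R := ℝ) (by exact_mod_cast hV)
  have hz : 1 - T / (‖x‖ ^ 2 + T) = ‖x‖ ^ 2 / (‖x‖ ^ 2 + T) := by
    field_simp
    ring
  have euler := integral_rpow_mul_one_add_rpow_neg_mul_add_mul_rpow (B := ‖x‖ ^ 2 + T)
    (finrank ℝ V - (a + p)) ha ha' hT (by nlinarith)
  rw [hz, neg_sub,
    show (finrank ℝ V : ℝ) - (a + p) - finrank ℝ V / 2 + a = finrank ℝ V / 2 - p by ring,
    show (finrank ℝ V : ℝ) - (a + p) - finrank ℝ V / 2 = finrank ℝ V / 2 - (a + p) by ring]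
    at euler
  rw [integral_norm_sub_sq_add_rpow_neg_mul_norm_rpow_neg_eq_integral_Ioi x hT ha (by linarith) hap,
    euler]
  field_simp

theorem stmt15_general {σ α t : ℝ} (hσ : 0 < σ) (hα : 0 < α) (hα' : α < finrank ℝ V) (ht : 0 < t)
    (M : ℝ) (x : V) :
    ∫ y : V, fractionalPoissonKernel σ (x - y) t * (M * ‖y‖ ^ (-α)) =
      Gamma ((finrank ℝ V - α) / 2) * Gamma (σ + α / 2) / (Gamma (finrank ℝ V / 2) * Gamma σ) *
        M * (‖x‖ ^ 2 + t ^ 2) ^ (-(α / 2)) *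
        hyp2F1 (finrank ℝ V / 2 - σ - α / 2) (α / 2) (finrank ℝ V / 2)
          (‖x‖ ^ 2 / (‖x‖ ^ 2 + t ^ 2)) := by
  have hn : (0 : ℝ) < finrank ℝ V := by linarith
  have : Nontrivial V := nontrivial_of_finrank_pos (R := ℝ) (by exact_mod_cast hn)
  have ht_pow : (t ^ 2) ^ (-σ) = (t ^ (2 * σ))⁻¹ := by
    rw [← rpow_natCast_mul ht.le, Nat.cast_ofNat, mul_neg, rpow_neg ht.le]
  have factor (y : V) : fractionalPoissonKernel σ (x - y) t * (M * ‖y‖ ^ (-α)) =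
      Gamma (finrank ℝ V / 2 + σ) / (π ^ (finrank ℝ V / 2 : ℝ) * Gamma σ) * t ^ (2 * σ) * M *
        ((‖x - y‖ ^ 2 + t ^ 2) ^ (-(finrank ℝ V / 2 + σ)) * ‖y‖ ^ (-(2 * (α / 2)))) := by
    rw [fractionalPoissonKernel_eq, mul_div_cancel₀ α two_ne_zero]
    ring
  simp_rw [factor]
  rw [integral_const_mul, integral_norm_sub_sq_add_rpow_neg_mul_norm_rpow_neg x (by positivity)
    (by positivity) (by linarith) (by linarith), sub_add_cancel_left,
    show (finrank ℝ V : ℝ) - (α / 2 + (finrank ℝ V / 2 + σ)) = finrank ℝ V / 2 - σ - α / 2 by ring,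
    show α / 2 + (finrank ℝ V / 2 + σ) - finrank ℝ V / 2 = σ + α / 2 by ring, ← sub_div, ht_pow]
  field_simp

end InnerProductSpace
end

/-- Explicit formula for the `σ`-Poisson extension of `u₀(x) = M₀|x|^{-(n-2σ)/2}`
in terms of a hypergeometric function. -/
theorem stmt15 (n : ℕ) (hn : 2 ≤ n) (σ M₀ : ℝ) (hσ : 0 < σ) (hσ' : σ < (n : ℝ) / 2)
    (hM : 0 < M₀) (x : EuclideanSpace ℝ (Fin n)) (t : ℝ) (ht : 0 < t) :
    ∫ y : EuclideanSpace ℝ (Fin n),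
        (2 / (2 * Real.pi ^ ((n : ℝ) / 2) / Real.Gamma ((n : ℝ) / 2)) *
            (Real.Gamma ((n : ℝ) / 2 + σ) / (Real.Gamma ((n : ℝ) / 2) * Real.Gamma σ))) *
          t ^ (2 * σ) / (‖x - y‖ ^ 2 + t ^ 2) ^ (((n : ℝ) + 2 * σ) / 2) *
          (M₀ * ‖y‖ ^ (-(((n : ℝ) - 2 * σ) / 2))) =
      Real.Gamma (((n : ℝ) + 2 * σ) / 4) ^ 2 / (Real.Gamma ((n : ℝ) / 2) * Real.Gamma σ) *
        M₀ * (‖x‖ ^ 2 + t ^ 2) ^ (-(((n : ℝ) - 2 * σ) / 4)) *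
        hyp2F1 (((n : ℝ) - 2 * σ) / 4) (((n : ℝ) - 2 * σ) / 4) ((n : ℝ) / 2)
          (‖x‖ ^ 2 / (‖x‖ ^ 2 + t ^ 2)) := by
  have h := stmt15_general hσ (α := (n - 2 * σ) / 2) (by linarith)
    (by rw [finrank_euclideanSpace_fin]; linarith) ht M₀ x
  simp only [fractionalPoissonKernel, finrank_euclideanSpace_fin] at h
  convert h using 3 <;> ring_nf
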